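/- arXiv:2412.21048 — 2 statements merged into one kernel-verified Lean document; each statement's English description precedes it below -/
import Mathlib

section
/- Let 0 < α < 1. There exists a constant C (depending only on Ω, ω, α, n) such that for every continuous f : ℝⁿ → ℝ with ‖f‖_{Λ_α} < ∞, with support contained in the closure of Ω, and with ∫_{ℝⁿ} f = 0, the Bogovskiĭ field u of f is continuously differentiable on ℝⁿ, vanishes outside the closure of Ω, satisfies div u = f on Ω, and for all indices 1 ≤ i, j ≤ n one has ‖∂u_i/∂x_j‖_{Λ_α} ≤ C ‖f‖_{Λ_α}. -/
open MeasureTheory Metric Set Filter Topology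

/-- The inhomogeneous Hölder (Lipschitz-α) norm
`‖g‖_{Λ_α} = sup |g| + sup_{x ≠ y} |g(x) − g(y)|/|x−y|^α`. -/
noncomputable def lambdaNorm (n : ℕ) (α : ℝ) (g : EuclideanSpace ℝ (Fin n) → ℝ) : ℝ :=
  (⨆ x : EuclideanSpace ℝ (Fin n), |g x|) +
  ⨆ p : {p : EuclideanSpace ℝ (Fin n) × EuclideanSpace ℝ (Fin n) // p.1 ≠ p.2},
    |g p.1.1 - g p.1.2| / ‖p.1.1 - p.1.2‖ ^ α

/-!
In the variable `v = (x - y) / s` the Bogovskiĭ field becomes a superposition over the scales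
`0 < s < 1` of the averages `∫ f (x - s v) H (x + (1 - s) v, v) dv` of `f`. Only bounded `v`
contribute, as `f` and `ω` have bounded support, so the profile `H (p, v) = ω (p) v` may be cut off
in `v` and is then smooth with compact support. Differentiating such an average in `x` costs a
factor `s⁻¹` and replaces `H` by its derivative in the diagonal directions, which against constants
only contributes `O(s)`. For `f` Hölder continuous, the first and second derivatives of the average
at scale `s` are therefore `O(s ^ (α - 1))` and `O(s ^ (α - 2))`, and splitting the integral over
`s` at `|x - x'|` gives the Hölder estimate for the first derivatives of the field.

The divergence of the average with profile `ω (p) v` is minus the `s`-derivative of the average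
with profile `ω (p)`, so integrating over `0 < s < 1` gives `div u = f ∫ ω - ω ∫ f`.
-/

namespace Bogovskii

section Derivatives

variable {E P F : Type*} [NormedAddCommGroup E] [NormedSpace ℝ E] [NormedAddCommGroup P]
  [NormedSpace ℝ P] [NormedAddCommGroup F] [NormedSpace ℝ F]

/-- The derivative of `Φ` in the directions of the range of `L`, as a linear map on the domain
of `L`. -/
noncomputable def derivAlong (L : E →L[ℝ] P) (Φ : P → F) (q : P) : E →L[ℝ] F :=
  (fderiv ℝ Φ q).comp L

/-- The derivative of a function on `E × E` in the diagonal directions `(h, h)`. -/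
noncomputable abbrev diagDeriv (Φ : E × E → F) : E × E → E →L[ℝ] F :=
  derivAlong ((ContinuousLinearMap.id ℝ E).prod (ContinuousLinearMap.id ℝ E)) Φ

theorem contDiff_derivAlong {m n : WithTop ℕ∞} {Φ : P → F} (hΦ : ContDiff ℝ n Φ)
    (L : E →L[ℝ] P) (hmn : m + 1 ≤ n) : ContDiff ℝ m (derivAlong L Φ) :=
  (hΦ.fderiv_right hmn).clm_comp contDiff_const

theorem continuous_derivAlong {Φ : P → F} (hΦ : ContDiff ℝ 1 Φ) (L : E →L[ℝ] P) :
    Continuous (derivAlong L Φ) :=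
  (contDiff_derivAlong (m := 0) hΦ L (by simp)).continuous

theorem hasCompactSupport_derivAlong {Φ : P → F} (hΦ : HasCompactSupport Φ) (L : E →L[ℝ] P) :
    HasCompactSupport (derivAlong L Φ) :=
  (hΦ.fderiv ℝ).comp_left (g := fun A : P →L[ℝ] F ↦ A.comp L) (ContinuousLinearMap.zero_comp L)

end Derivatives

section HolderBound

variable {E F : Type*} [NormedAddCommGroup E] [NormedAddCommGroup F] {α N : ℝ} {g : E → F}

/-- Boundedness in the inhomogeneous Hölder space `Λ_α`: both the supremum norm and the `α`-Hölder
seminorm of `g` are at most `N`. -/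
structure HolderBound (α N : ℝ) (g : E → F) : Prop where
  norm_le : ∀ x, ‖g x‖ ≤ N
  norm_sub_le : ∀ x y, ‖g x - g y‖ ≤ N * ‖x - y‖ ^ α

theorem HolderBound.nonneg (hg : HolderBound α N g) : 0 ≤ N :=
  (norm_nonneg _).trans (hg.norm_le 0)

theorem HolderBound.continuous (hg : HolderBound α N g) (hα : 0 < α) : Continuous g := by
  refine continuous_iff_continuousAt.2 fun x ↦ tendsto_iff_norm_sub_tendsto_zero.2 ?_
  have hlim : Tendsto (fun y ↦ N * ‖y - x‖ ^ α) (𝓝 x) (𝓝 (N * ‖x - x‖ ^ α)) :=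
    Continuous.tendsto (by fun_prop (disch := simp [hα.le])) x
  rw [sub_self, norm_zero, Real.zero_rpow hα.ne', mul_zero] at hlim
  exact squeeze_zero (fun _ ↦ norm_nonneg _) (fun y ↦ hg.norm_sub_le y x) hlim

end HolderBound

section Slice

variable {E F : Type*} [NormedAddCommGroup E] [NormedAddCommGroup F] {Φ : E × E → F}

theorem eq_zero_of_notMem_image_snd_tsupport {p v : E} (hv : v ∉ Prod.snd '' tsupport Φ) :
    Φ (p, v) = 0 :=
  image_eq_zero_of_notMem_tsupport fun h ↦ hv ⟨(p, v), h, rfl⟩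

variable [NormedSpace ℝ E] [MeasurableSpace E] [NormedSpace ℝ F] (μ : Measure E) {f : E → ℝ}
  {s : ℝ} {x : E}

/-- The contribution of the scale `s` to a Bogovskiĭ-type integral, in the variable
`v = (x - y) / s`; the profile `Φ (p, v)` is evaluated at `p = y + v`. -/
noncomputable def slice (f : E → ℝ) (Φ : E × E → F) (s : ℝ) (x : E) : F :=
  ∫ v, f (x - s • v) • Φ (x + (1 - s) • v, v) ∂μ

theorem slice_eq_setIntegral (f : E → ℝ) (Φ : E × E → F) (s : ℝ) (x : E) :
    slice μ f Φ s x =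
      ∫ v in Prod.snd '' tsupport Φ, f (x - s • v) • Φ (x + (1 - s) • v, v) ∂μ :=
  (setIntegral_eq_integral_of_forall_compl_eq_zero fun v hv ↦ by
    rw [eq_zero_of_notMem_image_snd_tsupport hv, smul_zero]).symm

variable [IsFiniteMeasureOnCompacts μ]

theorem norm_slice_le {M N : ℝ} (hΦc : HasCompactSupport Φ) (hM : ∀ q, ‖Φ q‖ ≤ M)
    (hN : ∀ v ∈ Prod.snd '' tsupport Φ, |f (x - s • v)| ≤ N) :
    ‖slice μ f Φ s x‖ ≤ N * M * μ.real (Prod.snd '' tsupport Φ) := by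
  rw [slice_eq_setIntegral]
  refine norm_setIntegral_le_of_norm_le_const (hΦc.isCompact.image continuous_snd).measure_lt_top
    fun v hv ↦ ?_
  rw [norm_smul]
  gcongr
  exacts [(abs_nonneg _).trans (hN v hv), hN v hv, hM _]

variable [BorelSpace E]

theorem integrable_slice (hf : Continuous f) (hΦ : Continuous Φ) (hΦc : HasCompactSupport Φ)
    (s : ℝ) (x : E) : Integrable (fun v ↦ f (x - s • v) • Φ (x + (1 - s) • v, v)) μ := by
  refine Continuous.integrable_of_hasCompactSupport (by fun_prop) ?_
  refine HasCompactSupport.intro (hΦc.isCompact.image continuous_snd) fun v hv ↦ ?_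
  rw [eq_zero_of_notMem_image_snd_tsupport hv, smul_zero]

theorem slice_eq_slice_sub_const_add (hf : Continuous f) (hΦ : Continuous Φ)
    (hΦc : HasCompactSupport Φ) (c s : ℝ) (x : E) :
    slice μ f Φ s x = slice μ (fun y ↦ f y - c) Φ s x + c • slice μ 1 Φ s x := by
  have hf' := integrable_slice μ (hf.sub continuous_const) hΦ hΦc s x (f := fun y ↦ f y - c)
  have h1 := (integrable_slice μ continuous_one hΦ hΦc s x).smul c
  simpa [slice, sub_smul, integral_smul] using integral_add hf' h1

theorem continuous_slice [FiniteDimensional ℝ E] (hf : Continuous f) (hΦ : Continuous Φ)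
    (hΦc : HasCompactSupport Φ) :
    Continuous fun p : ℝ × E ↦ slice μ f Φ p.1 p.2 := by
  simp_rw [slice_eq_setIntegral]
  exact continuous_parametric_integral_of_continuous (by fun_prop)
    (hΦc.isCompact.image continuous_snd)

end Slice

section Cancellation

variable {E F : Type*} [NormedAddCommGroup E] [NormedSpace ℝ E] [FiniteDimensional ℝ E]
  [MeasurableSpace E] [BorelSpace E] [NormedAddCommGroup F] [NormedSpace ℝ F] (μ : Measure E)
  [μ.IsAddHaarMeasure] {Φ : E × E → F}

theorem integral_fderiv_eq_zero {g : E → F} (hg : ContDiff ℝ 1 g)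
    (hgc : HasCompactSupport g) : ∫ v, fderiv ℝ g v ∂μ = 0 := by
  have hg' : Continuous (fderiv ℝ g) := hg.continuous_fderiv one_ne_zero
  have hint : Integrable (fderiv ℝ g) μ := hg'.integrable_of_hasCompactSupport (hgc.fderiv ℝ)
  ext h
  have hparts := integral_smul_fderiv_eq_neg_fderiv_smul_of_integrable (μ := μ) (v := h)
    (f := fun _ : E ↦ (1 : ℝ)) (g := g) (by simp) (by simpa using hint.apply_continuousLinearMap h)
    (by simpa using hg.continuous.integrable_of_hasCompactSupport hgc) (by fun_prop)
    fun v _ ↦ hg.differentiable one_ne_zero v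
  rw [ContinuousLinearMap.integral_apply hint]
  simpa using hparts

/- The total `v`-derivative of `Φ (x + (1 - s) • v, v)` is `diagDeriv Φ` minus `s` times the
derivative in the first variable, and it integrates to zero. -/
theorem slice_one_diagDeriv (hΦ : ContDiff ℝ 1 Φ) (hΦc : HasCompactSupport Φ) (s : ℝ) (x : E) :
    slice μ 1 (diagDeriv Φ) s x =
      s • slice μ 1 (derivAlong (ContinuousLinearMap.inl ℝ E E) Φ) s x := by
  set g : E → F := fun v ↦ Φ (x + (1 - s) • v, v)
  have hg : ContDiff ℝ 1 g := by fun_prop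
  have hgc : HasCompactSupport g :=
    HasCompactSupport.intro (hΦc.isCompact.image continuous_snd) fun v hv ↦
      eq_zero_of_notMem_image_snd_tsupport hv
  have hint (L : E →L[ℝ] E × E) :
      Integrable (fun v ↦ derivAlong L Φ (x + (1 - s) • v, v)) μ := by
    simpa using integrable_slice μ (f := 1) continuous_one (continuous_derivAlong hΦ L)
      (hasCompactSupport_derivAlong hΦc L) s x
  have hderiv (v : E) : fderiv ℝ g v = diagDeriv Φ (x + (1 - s) • v, v) -
      s • derivAlong (ContinuousLinearMap.inl ℝ E E) Φ (x + (1 - s) • v, v) := by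
    have hpath : HasFDerivAt (fun w : E ↦ (x + (1 - s) • w, w))
        (((1 - s) • ContinuousLinearMap.id ℝ E).prod (ContinuousLinearMap.id ℝ E)) v :=
      (((hasFDerivAt_id v).const_smul (1 - s)).const_add x).prodMk (hasFDerivAt_id v)
    refine (((hΦ.differentiable one_ne_zero _).hasFDerivAt.comp v hpath).fderiv).trans ?_
    ext h
    simp only [derivAlong, ContinuousLinearMap.comp_apply, sub_apply,
      smul_apply, ← map_smul, ← map_sub]
    simp [sub_smul]
  have hzero := integral_fderiv_eq_zero μ hg hgc
  simp_rw [hderiv] at hzero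
  have hsplit := integral_sub (hint ((ContinuousLinearMap.id ℝ E).prod (.id ℝ E)))
    ((hint (.inl ℝ E E)).smul s)
  simpa [slice, sub_eq_zero, integral_smul] using hsplit.symm.trans hzero

/- Cancellation: against constants `diagDeriv Φ` only contributes `O(s)`, so the Hölder continuity
of `f` gives the gain `s ^ α`. -/
theorem exists_norm_slice_diagDeriv_le (hΦ : ContDiff ℝ 1 Φ) (hΦc : HasCompactSupport Φ) {α : ℝ}
    (hα0 : 0 < α) (hα1 : α ≤ 1) :
    ∃ C, 0 ≤ C ∧ ∀ (f : E → ℝ) (N : ℝ), HolderBound α N f → ∀ s x, 0 < s → s ≤ 1 →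
      ‖slice μ f (diagDeriv Φ) s x‖ ≤ C * N * s ^ α := by
  have hcpt (L : E →L[ℝ] E × E) : HasCompactSupport (derivAlong L Φ) :=
    hasCompactSupport_derivAlong hΦc L
  obtain ⟨M, hM⟩ := (continuous_derivAlong hΦ _).bounded_above_of_compact_support
    (hcpt ((ContinuousLinearMap.id ℝ E).prod (ContinuousLinearMap.id ℝ E)))
  obtain ⟨M', hM'⟩ := (continuous_derivAlong hΦ _).bounded_above_of_compact_support
    (hcpt (ContinuousLinearMap.inl ℝ E E))
  set K := Prod.snd '' tsupport (diagDeriv Φ)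
  set K' := Prod.snd '' tsupport (derivAlong (ContinuousLinearMap.inl ℝ E E) Φ)
  obtain ⟨ρ, hρ0, hρ⟩ := ((hcpt _).isCompact.image continuous_snd : IsCompact K).isBounded
    |>.exists_pos_norm_le
  have hM0 : 0 ≤ M := (norm_nonneg _).trans (hM 0)
  have hM'0 : 0 ≤ M' := (norm_nonneg _).trans (hM' 0)
  refine ⟨ρ ^ α * M * μ.real K + M' * μ.real K', by positivity, ?_⟩
  intro f N hf s x hs0 hs1
  have hN := hf.nonneg
  have hosc : ∀ v ∈ K, |f (x - s • v) - f x| ≤ N * (s ^ α * ρ ^ α) := fun v hv ↦ by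
    calc |f (x - s • v) - f x| ≤ N * ‖x - s • v - x‖ ^ α := hf.norm_sub_le _ _
      _ = N * (s ^ α * ‖v‖ ^ α) := by
        rw [sub_sub_cancel_left, norm_neg, norm_smul, Real.norm_of_nonneg hs0.le,
          Real.mul_rpow hs0.le (norm_nonneg v)]
      _ ≤ N * (s ^ α * ρ ^ α) := by gcongr; exact hρ v hv
  have hconst : ‖slice μ 1 (derivAlong (ContinuousLinearMap.inl ℝ E E) Φ) s x‖ ≤
      M' * μ.real K' := by
    simpa using norm_slice_le (f := 1) (N := 1) μ (hcpt _) hM' (by simp)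
  have hs : s ≤ s ^ α := Real.self_le_rpow_of_le_one hs0.le hs1 hα1
  rw [slice_eq_slice_sub_const_add μ (hf.continuous hα0) (continuous_derivAlong hΦ _) (hcpt _)
    (f x), slice_one_diagDeriv μ hΦ hΦc]
  calc _ ≤ N * (s ^ α * ρ ^ α) * M * μ.real K + N * (s ^ α * (M' * μ.real K')) := by
        refine norm_add_le_of_le (norm_slice_le μ (hcpt _) hM hosc) ?_
        rw [norm_smul, norm_smul, Real.norm_of_nonneg hs0.le, Real.norm_eq_abs]
        gcongr
        exact hf.norm_le x
    _ = (ρ ^ α * M * μ.real K + M' * μ.real K') * N * s ^ α := by ring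

end Cancellation

section ParametricIntegral

variable {Q E F : Type*} [NormedAddCommGroup Q] [NormedSpace ℝ Q] [NormedAddCommGroup E]
  [NormedSpace ℝ E] [NormedAddCommGroup F] [NormedSpace ℝ F]

theorem continuous_uncurry_fderiv {k : Q → E → F} (hk : ContDiff ℝ 1 k.uncurry) :
    Continuous fun p : Q × E ↦ fderiv ℝ (k · p.2) p.1 :=
  (ContDiff.fderiv (f := fun (p : Q × E) q ↦ k q p.2) (n := 0) (m := 1)
    (hk.comp (contDiff_snd.prodMk contDiff_fst.snd)) contDiff_fst (by simp)).continuous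

variable [FiniteDimensional ℝ E] [MeasurableSpace E] [BorelSpace E] {μ : Measure E} {f : E → ℝ}

theorem integrable_smul_of_hasCompactSupport {g : E → F} (hf : Integrable f μ)
    (hfc : HasCompactSupport f) (hg : Continuous g) : Integrable (fun y ↦ f y • g y) μ := by
  refine (integrableOn_iff_integrable_of_support_subset ?_).1
    (hf.integrableOn.smul_continuousOn (K := tsupport f) hg.continuousOn hfc.isCompact)
  exact (Function.support_smul_subset_left f g).trans (subset_tsupport f)

theorem hasFDerivAt_integral_smul [FiniteDimensional ℝ Q] {k : Q → E → F} (hf : Integrable f μ)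
    (hfc : HasCompactSupport f) (hk : ContDiff ℝ 1 k.uncurry) (q : Q) :
    HasFDerivAt (fun q ↦ ∫ y, f y • k q y ∂μ) (∫ y, f y • fderiv ℝ (k · y) q ∂μ) q := by
  have hcont (q : Q) : Continuous (k q) := hk.continuous.comp (Continuous.prodMk_right q)
  have hk' := continuous_uncurry_fderiv hk
  obtain ⟨M, hM⟩ := ((isCompact_closedBall q 1).prod hfc.isCompact).exists_bound_of_continuousOn
    hk'.continuousOn
  refine hasFDerivAt_integral_of_dominated_of_fderiv_le (F := fun q y ↦ f y • k q y)
    (F' := fun q y ↦ f y • fderiv ℝ (k · y) q) (bound := fun y ↦ ‖f y‖ * M)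
    (closedBall_mem_nhds q one_pos) ?_ (integrable_smul_of_hasCompactSupport hf hfc (hcont q)) ?_
    ?_ (hf.norm.mul_const M) ?_
  · exact .of_forall fun q ↦ hf.aestronglyMeasurable.smul (hcont q).aestronglyMeasurable
  · exact hf.aestronglyMeasurable.smul
      (hk'.comp (Continuous.prodMk_right q)).aestronglyMeasurable
  · refine .of_forall fun y p hp ↦ ?_
    rw [norm_smul]
    by_cases hy : y ∈ tsupport f
    · gcongr
      exact hM (p, y) ⟨hp, hy⟩
    · simp [image_eq_zero_of_notMem_tsupport hy]
  · refine .of_forall fun y p _ ↦ (DifferentiableAt.hasFDerivAt ?_).const_smul (f y)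
    exact (hk.comp (contDiff_id.prodMk contDiff_const)).differentiable one_ne_zero p

theorem hasDerivAt_integral_smul {k : ℝ → E → F} (hf : Integrable f μ)
    (hfc : HasCompactSupport f) (hk : ContDiff ℝ 1 k.uncurry) (t : ℝ) :
    HasDerivAt (fun t ↦ ∫ y, f y • k t y ∂μ) (∫ y, f y • deriv (k · y) t ∂μ) t := by
  have hint : Integrable (fun y ↦ f y • fderiv ℝ (k · y) t) μ :=
    integrable_smul_of_hasCompactSupport hf hfc
      ((continuous_uncurry_fderiv hk).comp (Continuous.prodMk_right t))
  have h := (hasFDerivAt_integral_smul hf hfc hk t).hasDerivAt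
  rwa [ContinuousLinearMap.integral_apply hint] at h

end ParametricIntegral

section ScaleKernel

variable {E F : Type*} [NormedAddCommGroup E] [NormedSpace ℝ E]
  [NormedAddCommGroup F] [NormedSpace ℝ F] {f : E → ℝ} {Φ : E × E → F} {s t : ℝ}

/-- The profile `Φ` at the scale `s = t⁻¹`, as a kernel in the variables `x` and `y`. -/
noncomputable def scaleKernel (Φ : E × E → F) (t : ℝ) (x y : E) : F :=
  t ^ Module.finrank ℝ E • Φ (y + t • (x - y), t • (x - y))

theorem hasFDerivAt_scaleKernel (hΦ : Differentiable ℝ Φ) (t : ℝ) (x y : E) :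
    HasFDerivAt (scaleKernel Φ t · y) (t • scaleKernel (diagDeriv Φ) t x y) x := by
  have hv : HasFDerivAt (fun x ↦ t • (x - y)) (t • ContinuousLinearMap.id ℝ E) x :=
    ((hasFDerivAt_id x).sub_const y).const_smul t
  refine (((hΦ _).hasFDerivAt.comp x ((hv.const_add y).prodMk hv)).const_smul
    (t ^ Module.finrank ℝ E)).congr_fderiv ?_
  ext h
  simp [scaleKernel, derivAlong, smul_comm t, ← map_smul]

theorem hasDerivAt_scaleKernel (hΦ : Differentiable ℝ Φ) (ht : t ≠ 0) (x y : E) :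
    HasDerivAt (scaleKernel Φ · x y)
      (t⁻¹ • scaleKernel (fun q ↦ (Module.finrank ℝ E : ℝ) • Φ q + diagDeriv Φ q q.2) t x y) t := by
  have hv : HasDerivAt (fun t : ℝ ↦ t • (x - y)) (x - y) t := by
    simpa using (hasDerivAt_id t).smul_const (x - y)
  have hcomp := (hΦ _).hasFDerivAt.comp_hasDerivAt t ((hv.const_add y).prodMk hv)
  refine ((hasDerivAt_pow (Module.finrank ℝ E) t).smul hcomp).congr_deriv ?_
  have hpow : (Module.finrank ℝ E : ℝ) * t ^ (Module.finrank ℝ E - 1) =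
      t⁻¹ * (t ^ Module.finrank ℝ E * Module.finrank ℝ E) := by
    rcases Module.finrank ℝ E with - | d
    · simp
    · field_simp
      simp [pow_succ, mul_comm]
  have hdiag : diagDeriv Φ (y + t • (x - y), t • (x - y)) (t • (x - y)) =
      t • fderiv ℝ Φ (y + t • (x - y), t • (x - y)) (x - y, x - y) := by
    simp [derivAlong, ← map_smul]
  simp only [scaleKernel, hdiag, hpow, smul_add, smul_smul]
  rw [add_comm]
  congr 2
  field_simp

variable [FiniteDimensional ℝ E] [MeasurableSpace E] [BorelSpace E] (μ : Measure E)
  [μ.IsAddHaarMeasure]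

theorem slice_eq_integral_scaleKernel (f : E → ℝ) (Φ : E × E → F) (hs : 0 < s) (x : E) :
    slice μ f Φ s x = ∫ y, f y • scaleKernel Φ s⁻¹ x y ∂μ := by
  set h : E → F := fun v ↦ f (x - s • v) • Φ (x + (1 - s) • v, v)
  have hy (y : E) : f y • scaleKernel Φ s⁻¹ x y =
      (s⁻¹ ^ Module.finrank ℝ E) • h (s⁻¹ • (x - y)) := by
    have hp : x + (1 - s) • s⁻¹ • (x - y) = y + s⁻¹ • (x - y) := by
      match_scalars <;> field_simp <;> ring
    simp only [h, hp, smul_inv_smul₀ hs.ne', sub_sub_cancel, scaleKernel]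
    rw [smul_comm]
  simp_rw [hy]
  rw [integral_smul, integral_sub_left_eq_self (fun z ↦ h (s⁻¹ • z)) μ x,
    Measure.integral_comp_smul_of_nonneg μ h s⁻¹ (hR := by positivity),
    smul_inv_smul₀ (by positivity)]
  rfl

variable {μ}

theorem hasFDerivAt_slice (hf : Integrable f μ) (hfc : HasCompactSupport f) (hΦ : ContDiff ℝ 1 Φ)
    (hs : 0 < s) (x : E) :
    HasFDerivAt (slice μ f Φ s) (s⁻¹ • slice μ f (diagDeriv Φ) s x) x := by
  have h := hasFDerivAt_integral_smul (k := scaleKernel Φ s⁻¹) hf hfc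
    (by unfold scaleKernel; fun_prop) x
  simp_rw [(hasFDerivAt_scaleKernel (hΦ.differentiable one_ne_zero) s⁻¹ _ _).fderiv,
    smul_comm _ s⁻¹, integral_smul, ← slice_eq_integral_scaleKernel μ f _ hs] at h
  exact h

theorem hasDerivAt_slice (hf : Integrable f μ) (hfc : HasCompactSupport f) (hΦ : ContDiff ℝ 1 Φ)
    (hs : 0 < s) (x : E) :
    HasDerivAt (slice μ f Φ · x) (-(s⁻¹ •
      slice μ f (fun q ↦ (Module.finrank ℝ E : ℝ) • Φ q + diagDeriv Φ q q.2) s x)) s := by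
  have h := hasDerivAt_integral_smul (k := fun t y ↦ scaleKernel Φ t x y) hf hfc
    (by unfold scaleKernel; fun_prop) s⁻¹
  have hs' : s⁻¹ ≠ 0 := inv_ne_zero hs.ne'
  simp_rw [(hasDerivAt_scaleKernel (hΦ.differentiable one_ne_zero) hs' x _).deriv,
    smul_comm _ s⁻¹⁻¹, integral_smul, ← slice_eq_integral_scaleKernel μ f _ hs] at h
  refine ((h.scomp s (hasDerivAt_inv hs.ne')).congr_deriv ?_).congr_of_eventuallyEq ?_
  · rw [inv_inv, neg_smul, smul_smul]
    congr 2
    field_simp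
  · filter_upwards [lt_mem_nhds hs] with s hs using slice_eq_integral_scaleKernel μ f Φ hs x

end ScaleKernel

section PowerIntegrals

variable {F : Type*} [NormedAddCommGroup F] [NormedSpace ℝ F] {g : ℝ → F} {A α δ : ℝ}

theorem integrableOn_Ioc_rpow_sub_one (hα : 0 < α) (δ : ℝ) :
    IntegrableOn (fun s : ℝ ↦ s ^ (α - 1)) (Ioc 0 δ) :=
  (intervalIntegral.intervalIntegrable_rpow' (by linarith)).1

theorem integral_Ioc_rpow_sub_one (hα : 0 < α) (hδ : 0 ≤ δ) :
    ∫ s in Ioc 0 δ, s ^ (α - 1) = δ ^ α / α := by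
  rw [← intervalIntegral.integral_of_le hδ, integral_rpow (.inl (by linarith))]
  simp [Real.zero_rpow hα.ne']

theorem norm_setIntegral_le_of_subset {b : ℝ → ℝ} {S T : Set ℝ} (hS : MeasurableSet S)
    (hT : MeasurableSet T) (hST : S ⊆ T) (hb : IntegrableOn b T) (hb0 : ∀ s ∈ T, 0 ≤ b s)
    (hg : ∀ s ∈ S, ‖g s‖ ≤ b s) : ‖∫ s in S, g s‖ ≤ ∫ s in T, b s :=
  (norm_integral_le_of_norm_le (hb.mono_set hST) (ae_restrict_of_forall_mem hS hg)).trans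
    (setIntegral_mono_set hb (ae_restrict_of_forall_mem hT hb0) hST.eventuallyLE)

/- The first bound is used on scales below `δ`, the second one above. -/
theorem norm_setIntegral_le_rpow {S : Set ℝ} (hα0 : 0 < α) (hα1 : α < 1) (hδ : 0 < δ)
    (hS : MeasurableSet S) (hS0 : S ⊆ Ioi 0) (hg : IntegrableOn g S) (hA : 0 ≤ A)
    (hsmall : ∀ s ∈ S, ‖g s‖ ≤ A * s ^ (α - 1))
    (hlarge : ∀ s ∈ S, ‖g s‖ ≤ A * s ^ (α - 2) * δ) :
    ‖∫ s in S, g s‖ ≤ A * (1 / α + 1 / (1 - α)) * δ ^ α := by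
  have hpos {p s : ℝ} (hs : 0 < s) : 0 ≤ A * s ^ p := mul_nonneg hA (Real.rpow_nonneg hs.le _)
  have hIoc : ‖∫ s in S ∩ Iic δ, g s‖ ≤ ∫ s in Ioc 0 δ, A * s ^ (α - 1) :=
    norm_setIntegral_le_of_subset (hS.inter measurableSet_Iic) measurableSet_Ioc
      (fun s hs ↦ ⟨hS0 hs.1, hs.2⟩) (Integrable.const_mul (integrableOn_Ioc_rpow_sub_one hα0 δ) A)
      (fun s hs ↦ hpos hs.1) fun s hs ↦ hsmall s hs.1
  have hIoi : ‖∫ s in S \ Iic δ, g s‖ ≤ ∫ s in Ioi δ, A * s ^ (α - 2) * δ :=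
    norm_setIntegral_le_of_subset (hS.diff measurableSet_Iic) measurableSet_Ioi
      (fun s hs ↦ mem_Ioi.2 (not_le.1 hs.2))
      (((integrableOn_Ioi_rpow_of_lt (by linarith) hδ).const_mul A).mul_const δ)
      (fun s hs ↦ mul_nonneg (hpos (hδ.trans hs)) hδ.le) fun s hs ↦ hlarge s hs.1
  have hα1' : 1 - α ≠ 0 := by linarith
  calc ‖∫ s in S, g s‖ = ‖(∫ s in S ∩ Iic δ, g s) + ∫ s in S \ Iic δ, g s‖ := by
        rw [integral_inter_add_sdiff measurableSet_Iic hg]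
    _ ≤ (∫ s in Ioc 0 δ, A * s ^ (α - 1)) + ∫ s in Ioi δ, A * s ^ (α - 2) * δ :=
        norm_add_le_of_le hIoc hIoi
    _ = A * (δ ^ α / α) + A * (-δ ^ (α - 1) / (α - 1)) * δ := by
        rw [integral_const_mul, integral_Ioc_rpow_sub_one hα0 hδ.le, integral_mul_const,
          integral_const_mul, integral_Ioi_rpow_of_lt (by linarith) hδ]
        ring_nf
    _ = A * (1 / α + 1 / (1 - α)) * δ ^ α := by
        rw [Real.rpow_sub_one hδ.ne', ← neg_sub 1 α]
        field_simp

theorem holderBound_setIntegral_Ioo {E : Type*} [NormedAddCommGroup E] {g : ℝ → E → F}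
    (hα0 : 0 < α) (hα1 : α < 1) (hA : 0 ≤ A) (hg : ∀ x, IntegrableOn (g · x) (Ioo 0 1))
    (hbound : ∀ s ∈ Ioo (0 : ℝ) 1, ∀ x, ‖g s x‖ ≤ A * s ^ (α - 1))
    (hlip : ∀ s ∈ Ioo (0 : ℝ) 1, ∀ x y, ‖g s x - g s y‖ ≤ A * s ^ (α - 2) * ‖x - y‖) :
    HolderBound α (2 * A * (1 / α + 1 / (1 - α))) fun x ↦ ∫ s in Ioo (0 : ℝ) 1, g s x := by
  have hα1' : 0 < 1 - α := sub_pos.2 hα1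
  refine ⟨fun x ↦ ?_, fun x y ↦ ?_⟩
  · calc ‖∫ s in Ioo (0 : ℝ) 1, g s x‖ ≤ ∫ s in Ioc (0 : ℝ) 1, A * s ^ (α - 1) :=
          norm_setIntegral_le_of_subset measurableSet_Ioo measurableSet_Ioc Ioo_subset_Ioc_self
            ((integrableOn_Ioc_rpow_sub_one hα0 1).const_mul A)
            (fun s hs ↦ mul_nonneg hA (Real.rpow_nonneg hs.1.le _)) fun s hs ↦ hbound s hs x
      _ = A * (1 / α) := by
          rw [integral_const_mul, integral_Ioc_rpow_sub_one hα0 zero_le_one, Real.one_rpow]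
      _ ≤ 2 * A * (1 / α + 1 / (1 - α)) := by
          gcongr
          · linarith
          · exact le_add_of_nonneg_right (by positivity)
  · rcases eq_or_ne x y with rfl | hxy
    · simp [Real.zero_rpow hα0.ne']
    rw [← integral_sub (hg x) (hg y)]
    refine norm_setIntegral_le_rpow (g := fun s ↦ g s x - g s y) hα0 hα1 (norm_sub_pos_iff.2 hxy)
      measurableSet_Ioo Ioo_subset_Ioi_self ((hg x).sub (hg y)) (by positivity) (fun s hs ↦ ?_)
      fun s hs ↦ ?_
    · calc ‖g s x - g s y‖ ≤ A * s ^ (α - 1) + A * s ^ (α - 1) :=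
            norm_sub_le_of_le (hbound s hs x) (hbound s hs y)
        _ = 2 * A * s ^ (α - 1) := by ring
    · refine (hlip s hs x y).trans ?_
      have := hs.1
      gcongr
      linarith

end PowerIntegrals

section ScaleIntegral

variable {E F : Type*} [NormedAddCommGroup E] [NormedSpace ℝ E] [MeasurableSpace E]
  [NormedAddCommGroup F] [NormedSpace ℝ F]

/-- The superposition over all scales `0 < s < 1` of the slices of a profile `H`. -/
noncomputable def scaleIntegral (μ : Measure E) (f : E → ℝ) (H : E × E → F) (x : E) : F :=
  ∫ s in Ioo (0 : ℝ) 1, slice μ f H s x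

variable [FiniteDimensional ℝ E] [BorelSpace E] {μ : Measure E} [μ.IsAddHaarMeasure]
  {f : E → ℝ} {H : E × E → F} {α N : ℝ}

theorem exists_norm_fderiv_slice_le (μ : Measure E) [μ.IsAddHaarMeasure] (hH : ContDiff ℝ 1 H)
    (hHc : HasCompactSupport H) (hα0 : 0 < α) (hα1 : α ≤ 1) :
    ∃ C, 0 ≤ C ∧ ∀ (f : E → ℝ) (N : ℝ), HasCompactSupport f → HolderBound α N f →
      ∀ s ∈ Ioo (0 : ℝ) 1, ∀ x, ‖fderiv ℝ (slice μ f H s) x‖ ≤ C * N * s ^ (α - 1) := by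
  obtain ⟨C, hC, hbound⟩ := exists_norm_slice_diagDeriv_le μ hH hHc hα0 hα1
  refine ⟨C, hC, fun f N hfc hf s ⟨hs0, hs1⟩ x ↦ ?_⟩
  have hfint : Integrable f μ := (hf.continuous hα0).integrable_of_hasCompactSupport hfc
  calc ‖fderiv ℝ (slice μ f H s) x‖ = s⁻¹ * ‖slice μ f (diagDeriv H) s x‖ := by
        rw [(hasFDerivAt_slice hfint hfc hH hs0 x).fderiv, norm_smul, norm_inv,
          Real.norm_of_nonneg hs0.le]
    _ ≤ s⁻¹ * (C * N * s ^ α) := by gcongr; exact hbound f N hf s x hs0 hs1.le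
    _ = C * N * s ^ (α - 1) := by rw [Real.rpow_sub_one hs0.ne']; ring

/- The second derivative of a slice is an average of `f` against `diagDeriv (diagDeriv H)`, so it
benefits from the cancellation like the first one. -/
theorem exists_norm_fderiv_slice_sub_le (μ : Measure E) [μ.IsAddHaarMeasure]
    (hH : ContDiff ℝ 2 H) (hHc : HasCompactSupport H) (hα0 : 0 < α) (hα1 : α ≤ 1) :
    ∃ C, 0 ≤ C ∧ ∀ (f : E → ℝ) (N : ℝ), HasCompactSupport f → HolderBound α N f →
      ∀ s ∈ Ioo (0 : ℝ) 1, ∀ x y,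
        ‖fderiv ℝ (slice μ f H s) x - fderiv ℝ (slice μ f H s) y‖ ≤
          C * N * s ^ (α - 2) * ‖x - y‖ := by
  have hD : ContDiff ℝ 1 (diagDeriv H) := contDiff_derivAlong hH _ (by norm_num)
  obtain ⟨C, hC, hbound⟩ :=
    exists_norm_fderiv_slice_le μ hD (hasCompactSupport_derivAlong hHc _) hα0 hα1
  refine ⟨C, hC, fun f N hfc hf s hs x y ↦ ?_⟩
  have hfint : Integrable f μ := (hf.continuous hα0).integrable_of_hasCompactSupport hfc
  have hderiv (x : E) : fderiv ℝ (slice μ f H s) x = s⁻¹ • slice μ f (diagDeriv H) s x :=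
    (hasFDerivAt_slice hfint hfc (hH.of_le one_le_two) hs.1 x).fderiv
  have hlip : ‖slice μ f (diagDeriv H) s x - slice μ f (diagDeriv H) s y‖ ≤
      C * N * s ^ (α - 1) * ‖x - y‖ :=
    convex_univ.norm_image_sub_le_of_norm_fderiv_le
      (fun z _ ↦ (hasFDerivAt_slice hfint hfc hD hs.1 z).differentiableAt)
      (fun z _ ↦ hbound f N hfc hf s hs z) (mem_univ y) (mem_univ x)
  calc _ = s⁻¹ * ‖slice μ f (diagDeriv H) s x - slice μ f (diagDeriv H) s y‖ := by
        rw [hderiv, hderiv, ← smul_sub, norm_smul, norm_inv, Real.norm_of_nonneg hs.1.le]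
    _ ≤ s⁻¹ * (C * N * s ^ (α - 1) * ‖x - y‖) := by have := hs.1; gcongr
    _ = C * N * s ^ (α - 2) * ‖x - y‖ := by
        rw [show α - 2 = α - 1 - 1 by ring, Real.rpow_sub_one hs.1.ne' (α - 1)]
        ring

theorem continuousOn_fderiv_slice (hf : Continuous f) (hfc : HasCompactSupport f)
    (hH : ContDiff ℝ 1 H) (hHc : HasCompactSupport H) (x : E) :
    ContinuousOn (fun s ↦ fderiv ℝ (slice μ f H s) x) (Ioi 0) := by
  have hslice : Continuous fun s ↦ slice μ f (diagDeriv H) s x :=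
    (continuous_slice μ hf (continuous_derivAlong hH _) (hasCompactSupport_derivAlong hHc _)).comp
      (Continuous.prodMk_left x)
  refine ((continuousOn_inv₀.mono fun s hs ↦ (mem_Ioi.1 hs).ne').smul
    hslice.continuousOn).congr fun s hs ↦ ?_
  exact (hasFDerivAt_slice (hf.integrable_of_hasCompactSupport hfc) hfc hH hs x).fderiv

theorem integrableOn_fderiv_slice (hf : HolderBound α N f) (hfc : HasCompactSupport f)
    (hH : ContDiff ℝ 1 H) (hHc : HasCompactSupport H) (hα0 : 0 < α) (hα1 : α ≤ 1) (x : E) :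
    IntegrableOn (fun s ↦ fderiv ℝ (slice μ f H s) x) (Ioo 0 1) := by
  obtain ⟨C, -, hbound⟩ := exists_norm_fderiv_slice_le μ hH hHc hα0 hα1
  refine Integrable.mono' (((integrableOn_Ioc_rpow_sub_one hα0 1).mono_set
    Ioo_subset_Ioc_self).const_mul (C * N)) ?_
    (ae_restrict_of_forall_mem measurableSet_Ioo fun s hs ↦ hbound f N hfc hf s hs x)
  exact ((continuousOn_fderiv_slice (hf.continuous hα0) hfc hH hHc x).mono
    Ioo_subset_Ioi_self).aestronglyMeasurable measurableSet_Ioo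

theorem hasFDerivAt_scaleIntegral (hf : HolderBound α N f) (hfc : HasCompactSupport f)
    (hH : ContDiff ℝ 1 H) (hHc : HasCompactSupport H) (hα0 : 0 < α) (hα1 : α ≤ 1) (x : E) :
    HasFDerivAt (scaleIntegral μ f H)
      (∫ s in Ioo (0 : ℝ) 1, fderiv ℝ (slice μ f H s) x) x := by
  obtain ⟨C, -, hbound⟩ := exists_norm_fderiv_slice_le μ hH hHc hα0 hα1
  have hcont := hf.continuous hα0
  have hslice (x : E) : Continuous fun s ↦ slice μ f H s x :=
    (continuous_slice μ hcont hH.continuous hHc).comp (Continuous.prodMk_left x)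
  refine hasFDerivAt_integral_of_dominated_of_fderiv_le (F := fun x s ↦ slice μ f H s x)
    (F' := fun x s ↦ fderiv ℝ (slice μ f H s) x) (bound := fun s ↦ C * N * s ^ (α - 1)) univ_mem
    (.of_forall fun x ↦ (hslice x).aestronglyMeasurable)
    ((hslice x).integrableOn_Icc.mono_set Ioo_subset_Icc_self)
    (integrableOn_fderiv_slice hf hfc hH hHc hα0 hα1 x).aestronglyMeasurable
    (ae_restrict_of_forall_mem measurableSet_Ioo fun s hs x _ ↦ hbound f N hfc hf s hs x)
    (((integrableOn_Ioc_rpow_sub_one hα0 1).mono_set Ioo_subset_Ioc_self).const_mul (C * N))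
    (ae_restrict_of_forall_mem measurableSet_Ioo fun s hs x _ ↦ ?_)
  exact (hasFDerivAt_slice (hcont.integrable_of_hasCompactSupport hfc) hfc hH hs.1
    x).differentiableAt.hasFDerivAt

theorem exists_holderBound_fderiv_scaleIntegral (μ : Measure E) [μ.IsAddHaarMeasure]
    (hH : ContDiff ℝ 2 H) (hHc : HasCompactSupport H) (hα0 : 0 < α) (hα1 : α < 1) :
    ∃ C, 0 ≤ C ∧ ∀ (f : E → ℝ) (N : ℝ), HasCompactSupport f → HolderBound α N f →
      HolderBound α (C * N) (fderiv ℝ (scaleIntegral μ f H)) := by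
  have hH1 : ContDiff ℝ 1 H := hH.of_le one_le_two
  obtain ⟨C₁, hC₁, hbound₁⟩ := exists_norm_fderiv_slice_le μ hH1 hHc hα0 hα1.le
  obtain ⟨C₂, -, hbound₂⟩ := exists_norm_fderiv_slice_sub_le μ hH hHc hα0 hα1.le
  have hα1' : 0 < 1 - α := sub_pos.2 hα1
  refine ⟨2 * max C₁ C₂ * (1 / α + 1 / (1 - α)), by positivity, fun f N hfc hf ↦ ?_⟩
  have hN := hf.nonneg
  have hderiv : fderiv ℝ (scaleIntegral μ f H) =
      fun x ↦ ∫ s in Ioo (0 : ℝ) 1, fderiv ℝ (slice μ f H s) x :=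
    funext fun x ↦ (hasFDerivAt_scaleIntegral hf hfc hH1 hHc hα0 hα1.le x).fderiv
  have hholder := holderBound_setIntegral_Ioo (A := max C₁ C₂ * N)
    (g := fun s ↦ fderiv ℝ (slice μ f H s)) hα0 hα1 (by positivity)
    (integrableOn_fderiv_slice hf hfc hH1 hHc hα0 hα1.le)
    (fun s hs x ↦ (hbound₁ f N hfc hf s hs x).trans <| by
      have := hs.1; gcongr; exact le_max_left _ _)
    fun s hs x y ↦ (hbound₂ f N hfc hf s hs x y).trans <| by
      have := hs.1; gcongr; exact le_max_right _ _
  rw [hderiv]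
  convert hholder using 1
  ring

end ScaleIntegral

section Divergence

variable {E : Type*} [NormedAddCommGroup E] [NormedSpace ℝ E] [FiniteDimensional ℝ E]

/-- The trace as a continuous linear functional: the divergence of `u` at `x` is
`traceCLM E (fderiv ℝ u x)`. -/
noncomputable def traceCLM (E : Type*) [NormedAddCommGroup E] [NormedSpace ℝ E]
    [FiniteDimensional ℝ E] : (E →L[ℝ] E) →L[ℝ] ℝ :=
  LinearMap.toContinuousLinearMap (LinearMap.trace ℝ E ∘ₗ ContinuousLinearMap.coeLM ℝ)

theorem traceCLM_apply (A : E →L[ℝ] E) : traceCLM E A = LinearMap.trace ℝ E A := rfl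

theorem traceCLM_diagDeriv_smul_snd {φ : E × E → ℝ} (hφ : Differentiable ℝ φ) (q : E × E) :
    traceCLM E (diagDeriv (fun q ↦ φ q • q.2) q) =
      (Module.finrank ℝ E : ℝ) • φ q + diagDeriv φ q q.2 := by
  have hderiv : (diagDeriv (fun q ↦ φ q • q.2) q : E →ₗ[ℝ] E) =
      φ q • LinearMap.id + (diagDeriv φ q : E →ₗ[ℝ] ℝ).smulRight q.2 := by
    ext h
    simp [derivAlong, fderiv_fun_smul (hφ q) differentiableAt_snd, fderiv_snd]
  rw [traceCLM_apply, hderiv, map_add, map_smul, LinearMap.trace_id, LinearMap.trace_smulRight]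
  simp [mul_comm]

variable [MeasurableSpace E] [BorelSpace E] {μ : Measure E} [μ.IsAddHaarMeasure] {f : E → ℝ}
  {φ : E × E → ℝ} {α N s : ℝ}

theorem hasDerivAt_slice_eq_neg_trace (hf : Continuous f) (hfc : HasCompactSupport f)
    (hφ : ContDiff ℝ 1 φ) (hφc : HasCompactSupport φ) (hs : 0 < s) (x : E) :
    HasDerivAt (slice μ f φ · x)
      (-traceCLM E (fderiv ℝ (slice μ f (fun q ↦ φ q • q.2) s) x)) s := by
  have hfint : Integrable f μ := hf.integrable_of_hasCompactSupport hfc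
  have hH : ContDiff ℝ 1 fun q ↦ φ q • q.2 := hφ.smul contDiff_snd
  have hHc : HasCompactSupport fun q ↦ φ q • q.2 := hφc.smul_right
  have hint := integrable_slice (Φ := diagDeriv fun q ↦ φ q • q.2) μ hf
    (continuous_derivAlong hH _) (hasCompactSupport_derivAlong hHc _) s x
  have htrace : traceCLM E (slice μ f (diagDeriv fun q ↦ φ q • q.2) s x) =
      slice μ f (fun q ↦ (Module.finrank ℝ E : ℝ) • φ q + diagDeriv φ q q.2) s x := by
    simp_rw [slice, ← (traceCLM E).integral_comp_comm hint, map_smul,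
      traceCLM_diagDeriv_smul_snd (hφ.differentiable one_ne_zero)]
  rw [(hasFDerivAt_slice hfint hfc hH hs x).fderiv, map_smul, htrace]
  exact hasDerivAt_slice hfint hfc hφ hs x

theorem trace_fderiv_scaleIntegral (hf : HolderBound α N f) (hfc : HasCompactSupport f)
    (hφ : ContDiff ℝ 1 φ) (hφc : HasCompactSupport φ) (hα0 : 0 < α) (hα1 : α ≤ 1) (x : E) :
    traceCLM E (fderiv ℝ (scaleIntegral μ f fun q ↦ φ q • q.2) x) =
      slice μ f φ 0 x - slice μ f φ 1 x := by
  have hcont := hf.continuous hα0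
  have hH : ContDiff ℝ 1 fun q ↦ φ q • q.2 := hφ.smul contDiff_snd
  have hHc : HasCompactSupport fun q ↦ φ q • q.2 := hφc.smul_right
  have hint := integrableOn_fderiv_slice (μ := μ) hf hfc hH hHc hα0 hα1 x
  have hslice : Continuous fun s ↦ slice μ f φ s x :=
    (continuous_slice μ hcont hφ.continuous hφc).comp (Continuous.prodMk_left x)
  have hderiv : ∀ s ∈ Ioo (0 : ℝ) 1, HasDerivAt (slice μ f φ · x)
      (-traceCLM E (fderiv ℝ (slice μ f (fun q ↦ φ q • q.2) s) x)) s :=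
    fun s hs ↦ hasDerivAt_slice_eq_neg_trace hcont hfc hφ hφc hs.1 x
  have hFTC := intervalIntegral.integral_eq_sub_of_hasDerivAt_of_le zero_le_one
    hslice.continuousOn hderiv ((intervalIntegrable_iff_integrableOn_Ioo_of_le zero_le_one).2
      ((traceCLM E).integrable_comp hint).neg)
  rw [intervalIntegral.integral_neg, intervalIntegral.integral_of_le zero_le_one,
    integral_Ioc_eq_integral_Ioo, (traceCLM E).integral_comp_comm hint] at hFTC
  rw [(hasFDerivAt_scaleIntegral hf hfc hH hHc hα0 hα1 x).fderiv, ← neg_sub, ← hFTC, neg_neg]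

end Divergence

section Fubini

variable {E F : Type*} [NormedAddCommGroup E] [NormedSpace ℝ E] [FiniteDimensional ℝ E]
  [MeasurableSpace E] [BorelSpace E] [NormedAddCommGroup F] [NormedSpace ℝ F] {μ : Measure E}
  [μ.IsAddHaarMeasure] {f : E → ℝ} {H : E × E → F}

theorem integrable_smul_scaleKernel_inv (hf : Continuous f) (hfc : HasCompactSupport f)
    (hH : Continuous H) (hHc : HasCompactSupport H) (x : E) :
    Integrable (fun p : ℝ × E ↦ f p.2 • scaleKernel H p.1⁻¹ x p.2)
      ((volume.restrict (Ioo 0 1)).prod μ) := by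
  have hcont : Continuous fun p : ℝ × E ↦ scaleKernel H p.1 x p.2 := by
    unfold scaleKernel
    fun_prop
  have hmeas : StronglyMeasurable fun p : ℝ × E ↦ f p.2 • scaleKernel H p.1⁻¹ x p.2 :=
    ((hf.comp continuous_snd).smul hcont).stronglyMeasurable.comp_measurable
      (measurable_fst.inv.prodMk measurable_snd)
  refine (integrable_prod_iff hmeas.aestronglyMeasurable).2 ⟨.of_forall fun s ↦ ?_, ?_⟩
  · exact integrable_smul_of_hasCompactSupport (hf.integrable_of_hasCompactSupport hfc) hfc
      (hcont.comp (Continuous.prodMk_right s⁻¹))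
  have hnorm : ∀ s ∈ Ioo (0 : ℝ) 1, slice μ (|f ·|) (‖H ·‖) s x =
      ∫ y, ‖f y • scaleKernel H s⁻¹ x y‖ ∂μ := fun s hs ↦ by
    simp_rw [slice_eq_integral_scaleKernel μ _ _ hs.1, scaleKernel, norm_smul, norm_pow,
      Real.norm_of_nonneg (inv_nonneg.2 hs.1.le), Real.norm_eq_abs, smul_eq_mul]
  have hslice : Continuous fun s ↦ slice μ (|f ·|) (‖H ·‖) s x :=
    (continuous_slice μ hf.abs hH.norm hHc.norm).comp (Continuous.prodMk_left x)
  exact (hslice.integrableOn_Icc.mono_set Ioo_subset_Icc_self).congr_fun hnorm measurableSet_Ioo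

theorem scaleIntegral_eq_integral_smul (hf : Continuous f) (hfc : HasCompactSupport f)
    (hH : Continuous H) (hHc : HasCompactSupport H) (x : E) :
    scaleIntegral μ f H x = ∫ y, f y • (∫ s in Ioo (0 : ℝ) 1, scaleKernel H s⁻¹ x y) ∂μ := by
  calc scaleIntegral μ f H x
      = ∫ s in Ioo (0 : ℝ) 1, ∫ y, f y • scaleKernel H s⁻¹ x y ∂μ :=
        setIntegral_congr_fun measurableSet_Ioo fun s hs ↦
          slice_eq_integral_scaleKernel μ f H hs.1 x
    _ = ∫ y, (∫ s in Ioo (0 : ℝ) 1, f y • scaleKernel H s⁻¹ x y) ∂μ :=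
        integral_integral_swap (integrable_smul_scaleKernel_inv hf hfc hH hHc x)
    _ = _ := by simp_rw [integral_smul]

end Fubini

section CutoffWeight

variable {E : Type*} [NormedAddCommGroup E] {f ω χ : E → ℝ} {R : ℝ}

/-- The weight `ω (p)` as a function of `(p, v)`, cut off in `v` to make its support compact. -/
def cutoffWeight (χ ω : E → ℝ) (q : E × E) : ℝ := χ q.2 * ω q.1

theorem hasCompactSupport_cutoffWeight (hχ : HasCompactSupport χ) (hω : HasCompactSupport ω) :
    HasCompactSupport (cutoffWeight χ ω) := by
  refine .intro (hω.isCompact.prod hχ.isCompact) fun q hq ↦ ?_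
  rcases not_and_or.1 hq with h | h <;> simp [cutoffWeight, image_eq_zero_of_notMem_tsupport h]

theorem smul_cutoffWeight (hf : Function.support f ⊆ closedBall 0 R)
    (hω : Function.support ω ⊆ closedBall 0 R) (hχ : EqOn χ 1 (closedBall 0 (R + R))) (y v : E) :
    f y * cutoffWeight χ ω (y + v, v) = f y * ω (y + v) := by
  by_cases h : f y = 0 ∨ ω (y + v) = 0
  · rcases h with h | h <;> simp [cutoffWeight, h]
  obtain ⟨hy, hv⟩ := not_or.1 h
  have hmem : v ∈ closedBall 0 (R + R) := by
    simpa using norm_sub_le_of_le (mem_closedBall_zero_iff.1 (hω hv))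
      (mem_closedBall_zero_iff.1 (hf hy))
  simp [cutoffWeight, hχ hmem]

variable [NormedSpace ℝ E] [MeasurableSpace E] [BorelSpace E] {μ : Measure E}
  [μ.IsAddHaarMeasure]

theorem slice_zero_cutoffWeight (hf : Function.support f ⊆ closedBall 0 R)
    (hω : Function.support ω ⊆ closedBall 0 R) (hχ : EqOn χ 1 (closedBall 0 (R + R))) (x : E) :
    slice μ f (cutoffWeight χ ω) 0 x = f x * ∫ p, ω p ∂μ := by
  simp [slice, smul_cutoffWeight hf hω hχ, integral_const_mul, integral_add_left_eq_self]

variable [FiniteDimensional ℝ E]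

theorem slice_one_cutoffWeight (hf : Function.support f ⊆ closedBall 0 R)
    (hω : Function.support ω ⊆ closedBall 0 R) (hχ : EqOn χ 1 (closedBall 0 (R + R))) (x : E) :
    slice μ f (cutoffWeight χ ω) 1 x = (∫ y, f y ∂μ) * ω x := by
  have hcutoff (v : E) : f (x - v) * cutoffWeight χ ω (x, v) = f (x - v) * ω x := by
    simpa using smul_cutoffWeight hf hω hχ (x - v) v
  simp [slice, hcutoff, integral_mul_const, integral_sub_left_eq_self f μ x]

end CutoffWeight

section Field

variable {E : Type*} [NormedAddCommGroup E] [NormedSpace ℝ E] {f ω χ : E → ℝ} {R : ℝ}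

/-- The Bogovskiĭ kernel `G (x, y)` of the weight `ω`; on the diagonal the integrand vanishes, in
accordance with the convention `G (x, x) = 0`. -/
noncomputable def bogovskiiKernel (ω : E → ℝ) (x y : E) : E :=
  ∫ s in Ioo (0 : ℝ) 1,
    ((s ^ Module.finrank ℝ E)⁻¹ * ω (y + s⁻¹ • (x - y))) • (s⁻¹ • (x - y))

/-- The Bogovskiĭ field of `f`. It is integrated over the whole space, and so does not depend on a
domain: `f` is understood to vanish outside of it. -/
noncomputable def bogovskiiField [MeasurableSpace E] (μ : Measure E) (ω f : E → ℝ) (x : E) : E :=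
  ∫ y, f y • bogovskiiKernel ω x y ∂μ

variable [FiniteDimensional ℝ E] [MeasurableSpace E] [BorelSpace E] {μ : Measure E}
  [μ.IsAddHaarMeasure]

theorem bogovskiiField_eq_scaleIntegral (hf : Continuous f)
    (hfR : Function.support f ⊆ closedBall 0 R) (hω : Continuous ω)
    (hωR : Function.support ω ⊆ closedBall 0 R) (hχ : Continuous χ) (hχc : HasCompactSupport χ)
    (hχR : EqOn χ 1 (closedBall 0 (R + R))) :
    bogovskiiField μ ω f = scaleIntegral μ f fun q ↦ cutoffWeight χ ω q • q.2 := by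
  have hfc : HasCompactSupport f := .of_support_subset_isCompact (isCompact_closedBall 0 R) hfR
  have hωc : HasCompactSupport ω := .of_support_subset_isCompact (isCompact_closedBall 0 R) hωR
  ext1 x
  have hHc : HasCompactSupport fun q ↦ cutoffWeight χ ω q • q.2 :=
    (hasCompactSupport_cutoffWeight hχc hωc).smul_right
  rw [scaleIntegral_eq_integral_smul hf hfc (by unfold cutoffWeight; fun_prop) hHc]
  simp_rw [bogovskiiField, bogovskiiKernel, ← integral_smul]
  congr! 4 with y s
  have hcutoff := smul_cutoffWeight hfR hωR hχR y (s⁻¹ • (x - y))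
  simp only [scaleKernel, ← inv_pow, smul_smul]
  congr 1
  linear_combination -(s⁻¹ ^ Module.finrank ℝ E * s⁻¹) * hcutoff

theorem exists_bogovskiiField_estimate (μ : Measure E) [μ.IsAddHaarMeasure] (hω : ContDiff ℝ 2 ω)
    (hωR : Function.support ω ⊆ closedBall 0 R) {α : ℝ} (hα0 : 0 < α) (hα1 : α < 1) :
    ∃ C, 0 ≤ C ∧ ∀ (f : E → ℝ) (N : ℝ), Function.support f ⊆ closedBall 0 R →
      HolderBound α N f → ContDiff ℝ 1 (bogovskiiField μ ω f) ∧
        HolderBound α (C * N) (fderiv ℝ (bogovskiiField μ ω f)) ∧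
        ∀ x, traceCLM E (fderiv ℝ (bogovskiiField μ ω f) x) =
          f x * (∫ p, ω p ∂μ) - (∫ y, f y ∂μ) * ω x := by
  let χ : ContDiffBump (0 : E) :=
    ⟨|R| + |R| + 1, |R| + |R| + 2, by positivity, by linarith⟩
  have hχR : EqOn χ 1 (closedBall 0 (R + R)) := fun v hv ↦
    χ.one_of_mem_closedBall (closedBall_subset_closedBall
      (by change _ ≤ |R| + |R| + 1; linarith [le_abs_self R]) hv)
  have hφ : ContDiff ℝ 2 (cutoffWeight χ ω) :=
    (χ.contDiff.comp contDiff_snd).mul (hω.comp contDiff_fst)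
  have hφc : HasCompactSupport (cutoffWeight χ ω) := hasCompactSupport_cutoffWeight
    χ.hasCompactSupport (.of_support_subset_isCompact (isCompact_closedBall 0 R) hωR)
  obtain ⟨C, hC, hbound⟩ := exists_holderBound_fderiv_scaleIntegral μ
    (hφ.smul contDiff_snd) (hφc.smul_right (f' := Prod.snd)) hα0 hα1
  refine ⟨C, hC, fun f N hfR hf ↦ ?_⟩
  have hfc : HasCompactSupport f := .of_support_subset_isCompact (isCompact_closedBall 0 R) hfR
  have hholder := hbound f N hfc hf
  rw [bogovskiiField_eq_scaleIntegral (hf.continuous hα0) hfR hω.continuous hωR χ.continuous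
    χ.hasCompactSupport hχR]
  refine ⟨contDiff_one_iff_fderiv.2 ⟨fun x ↦ ?_, hholder.continuous hα0⟩, hholder, fun x ↦ ?_⟩
  · exact (hasFDerivAt_scaleIntegral hf hfc ((hφ.smul contDiff_snd).of_le one_le_two)
      hφc.smul_right hα0 hα1.le x).differentiableAt
  · rw [trace_fderiv_scaleIntegral hf hfc (hφ.of_le one_le_two) hφc hα0 hα1.le,
      slice_zero_cutoffWeight hfR hωR hχR, slice_one_cutoffWeight hfR hωR hχR]

end Field

section StarShaped

variable {E : Type*} [AddCommGroup E] [Module ℝ E] {Ω B : Set E}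

/- A point `x` of the interior lies strictly between a point `c` of `B` and a point of `closure Ω`;
moving the latter into `Ω` while keeping `x` on the segment moves `c` within `B`. -/
theorem interior_closure_subset_of_starConvex [TopologicalSpace E] [IsTopologicalAddGroup E]
    [ContinuousSMul ℝ E] (hB : IsOpen B) (hB' : B.Nonempty) (hΩ : ∀ p ∈ B, StarConvex ℝ p Ω) :
    interior (closure Ω) ⊆ Ω := by
  intro x hx
  obtain ⟨c, hc⟩ := hB'
  have hlim : Tendsto (fun t : ℝ ↦ x + t • (x - c)) (𝓝[>] 0) (𝓝 x) := by
    have : Continuous fun t : ℝ ↦ x + t • (x - c) := by fun_prop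
    simpa using (this.tendsto 0).mono_left nhdsWithin_le_nhds
  obtain ⟨t, hp, ht : 0 < t⟩ :=
    ((hlim.eventually_mem (mem_interior_iff_mem_nhds.1 hx)).and self_mem_nhdsWithin).exists
  have hcont : Continuous fun q ↦ x + t⁻¹ • (x - q) := by fun_prop
  have hmem : x + t • (x - c) ∈ (fun q ↦ x + t⁻¹ • (x - q)) ⁻¹' B := by
    simpa [inv_smul_smul₀ ht.ne'] using hc
  obtain ⟨q, hqB, hqΩ⟩ := mem_closure_iff.1 hp _ (hB.preimage hcont) hmem
  convert hΩ _ hqB hqΩ (a := t / (1 + t)) (b := 1 / (1 + t)) (by positivity) (by positivity)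
    (by field_simp; ring) using 1
  match_scalars <;> field_simp <;> ring

end StarShaped

section Support

variable {E : Type*} [NormedAddCommGroup E] [NormedSpace ℝ E] {ω : E → ℝ} {Ω B : Set E}

theorem bogovskiiKernel_eq_zero (hΩ : ∀ p ∈ B, StarConvex ℝ p Ω) (hω : Function.support ω ⊆ B)
    {x y : E} (hx : x ∉ Ω) (hy : y ∈ Ω) : bogovskiiKernel ω x y = 0 := by
  refine setIntegral_eq_zero_of_forall_eq_zero fun s ⟨hs0, hs1⟩ ↦ ?_
  suffices ω (y + s⁻¹ • (x - y)) = 0 by simp [this]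
  by_contra hne
  have hmem := hΩ _ (hω hne) hy hs0.le (sub_nonneg.2 hs1.le) (add_sub_cancel s 1)
  have hcomb : s • (y + s⁻¹ • (x - y)) + (1 - s) • y = x := by
    rw [smul_add, smul_inv_smul₀ hs0.ne']
    module
  exact hx (hcomb ▸ hmem)

theorem bogovskiiField_eq_zero [MeasurableSpace E] (μ : Measure E) {f : E → ℝ}
    (hΩ : ∀ p ∈ B, StarConvex ℝ p Ω) (hω : Function.support ω ⊆ B) (hf : Function.support f ⊆ Ω)
    {x : E} (hx : x ∉ Ω) : bogovskiiField μ ω f x = 0 := by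
  refine integral_eq_zero_of_ae (.of_forall fun y ↦ ?_)
  by_cases hy : y ∈ Ω
  · simp [bogovskiiKernel_eq_zero hΩ hω hx hy]
  · simp [Function.notMem_support.1 fun h ↦ hy (hf h)]

end Support

section Euclidean

variable {n : ℕ} {α N : ℝ}

theorem holderBound_lambdaNorm {f : EuclideanSpace ℝ (Fin n) → ℝ} (hα : 0 < α)
    (hM : ∃ M : ℝ, ∀ x, |f x| ≤ M) (hK : ∃ K : ℝ, ∀ x y, |f x - f y| ≤ K * ‖x - y‖ ^ α) :
    HolderBound α (lambdaNorm n α f) f := by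
  obtain ⟨M, hM⟩ := hM
  obtain ⟨K, hK⟩ := hK
  have hsup (x) : |f x| ≤ ⨆ x, |f x| := le_ciSup ⟨M, forall_mem_range.2 hM⟩ x
  refine ⟨fun x ↦ (hsup x).trans (le_add_of_nonneg_right (Real.iSup_nonneg fun p ↦ by positivity)),
    fun x y ↦ ?_⟩
  rcases eq_or_ne x y with rfl | hxy
  · simp [Real.zero_rpow hα.ne']
  have hpos {x y : EuclideanSpace ℝ (Fin n)} (h : x ≠ y) : 0 < ‖x - y‖ ^ α :=
    Real.rpow_pos_of_pos (norm_sub_pos_iff.2 h) α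
  rw [← div_le_iff₀ (hpos hxy)]
  refine le_trans ?_ (le_add_of_nonneg_left ((abs_nonneg _).trans (hsup 0)))
  exact le_ciSup (f := fun p : {p : EuclideanSpace ℝ (Fin n) × EuclideanSpace ℝ (Fin n) //
    p.1 ≠ p.2} ↦ |f p.1.1 - f p.1.2| / ‖p.1.1 - p.1.2‖ ^ α)
    ⟨K, forall_mem_range.2 fun p ↦ (div_le_iff₀ (hpos p.2)).2 (hK _ _)⟩ ⟨(x, y), hxy⟩

theorem lambdaNorm_le_two_mul {g : EuclideanSpace ℝ (Fin n) → ℝ} (hg : HolderBound α N g) :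
    lambdaNorm n α g ≤ 2 * N := by
  rw [two_mul]
  refine add_le_add (Real.iSup_le hg.norm_le hg.nonneg) (Real.iSup_le (fun p ↦ ?_) hg.nonneg)
  rw [div_le_iff₀ (Real.rpow_pos_of_pos (norm_sub_pos_iff.2 p.2) α)]
  exact hg.norm_sub_le _ _

variable {ι : Type*} [Fintype ι] [DecidableEq ι]

theorem traceCLM_euclideanSpace (A : EuclideanSpace ℝ ι →L[ℝ] EuclideanSpace ℝ ι) :
    traceCLM (EuclideanSpace ℝ ι) A = ∑ i, A (EuclideanSpace.single i 1) i := by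
  rw [traceCLM_apply, LinearMap.trace_eq_sum_inner _ (EuclideanSpace.basisFun ι ℝ)]
  simp [EuclideanSpace.inner_single_left]

theorem abs_apply_single_le_opNorm (A : EuclideanSpace ℝ ι →L[ℝ] EuclideanSpace ℝ ι) (i j : ι) :
    |A (EuclideanSpace.single j 1) i| ≤ ‖A‖ := by
  simpa using (PiLp.norm_apply_le _ i).trans (A.le_opNorm (EuclideanSpace.single j 1))

theorem HolderBound.partialDeriv {u : EuclideanSpace ℝ ι → EuclideanSpace ℝ ι}
    (hu : Differentiable ℝ u) (hu' : HolderBound α N (fderiv ℝ u)) (i j : ι) :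
    HolderBound α N fun x ↦ fderiv ℝ (fun x' ↦ u x' i) x (EuclideanSpace.single j 1) := by
  have hcoord (x) : fderiv ℝ (fun x' ↦ u x' i) x (EuclideanSpace.single j 1) =
      fderiv ℝ u x (EuclideanSpace.single j 1) i := by
    have hderiv : HasFDerivAt (fun x' ↦ u x' i) ((EuclideanSpace.proj i).comp (fderiv ℝ u x)) x :=
      (EuclideanSpace.proj (𝕜 := ℝ) i).hasFDerivAt.comp x (hu x).hasFDerivAt
    rw [hderiv.fderiv, ContinuousLinearMap.comp_apply, PiLp.proj_apply]
  simp_rw [hcoord]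
  exact ⟨fun x ↦ (abs_apply_single_le_opNorm _ i j).trans (hu'.norm_le x),
    fun x y ↦ (abs_apply_single_le_opNorm (fderiv ℝ u x - fderiv ℝ u y) i j).trans
      (hu'.norm_sub_le x y)⟩

end Euclidean

end Bogovskii

open Bogovskii

theorem bogovskii_lipschitz_estimate_general
    (n : ℕ) (Ω B : Set (EuclideanSpace ℝ (Fin n))) (hΩb : Bornology.IsBounded Ω)
    (hBo : IsOpen B) (hBΩ : B ⊆ Ω)
    (hstar : ∀ x ∈ Ω, ∀ y ∈ B, segment ℝ x y ⊆ Ω)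
    (ω : EuclideanSpace ℝ (Fin n) → ℝ) (hω : ContDiff ℝ 2 ω)
    (hωsupp : Function.support ω ⊆ B) (hωint : ∫ x, ω x = 1)
    (G : EuclideanSpace ℝ (Fin n) → EuclideanSpace ℝ (Fin n) → EuclideanSpace ℝ (Fin n))
    (hG : ∀ x y, x ≠ y → G x y =
      ∫ s in Set.Ioo (0 : ℝ) 1, ((s ^ n)⁻¹ * ω (y + s⁻¹ • (x - y))) • (s⁻¹ • (x - y)))
    (hGdiag : ∀ x, G x x = 0)
    (α : ℝ) (hα0 : 0 < α) (hα1 : α < 1) :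
    ∃ C : ℝ,
      ∀ f : EuclideanSpace ℝ (Fin n) → ℝ,
        Continuous f →
        (∃ M : ℝ, ∀ x, |f x| ≤ M) →
        (∃ K : ℝ, ∀ x y, |f x - f y| ≤ K * ‖x - y‖ ^ α) →
        tsupport f ⊆ closure Ω →
        (∫ x, f x) = 0 →
        ∀ u : EuclideanSpace ℝ (Fin n) → EuclideanSpace ℝ (Fin n),
          (∀ x, u x = ∫ y in Ω, f y • G x y) →
          ContDiff ℝ 1 u ∧
          (∀ x, x ∉ Ω → u x = 0) ∧
          (∀ x, ∑ i, fderiv ℝ u x (EuclideanSpace.single i 1) i = f x) ∧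
          (∀ i j : Fin n,
            lambdaNorm n α (fun x => fderiv ℝ (fun x' => u x' i) x (EuclideanSpace.single j 1))
              ≤ C * lambdaNorm n α f) := by
  have hΩ : ∀ p ∈ B, StarConvex ℝ p Ω := fun p hp ↦ starConvex_iff_segment_subset.2
    fun x hx ↦ segment_symm ℝ x p ▸ hstar x hx p hp
  have hB : B.Nonempty := nonempty_iff_ne_empty.2 fun hB ↦ by
    simp [Function.support_eq_empty_iff.1 (subset_empty_iff.1 (hB ▸ hωsupp))] at hωint
  obtain ⟨R, hR⟩ := hΩb.subset_closedBall 0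
  obtain ⟨C, -, hest⟩ :=
    exists_bogovskiiField_estimate volume hω (hωsupp.trans (hBΩ.trans hR)) hα0 hα1
  have hGω (x y) : G x y = bogovskiiKernel ω x y := by
    rcases eq_or_ne x y with rfl | hxy
    · simp [hGdiag, bogovskiiKernel]
    · simp [hG x y hxy, bogovskiiKernel]
  refine ⟨2 * C, fun f hf hM hK hfΩ hf0 u hu ↦ ?_⟩
  have hfsupp : Function.support f ⊆ Ω :=
    (interior_maximal ((subset_tsupport f).trans hfΩ) hf.isOpen_support).trans
      (interior_closure_subset_of_starConvex hBo hB hΩ)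
  obtain rfl : u = bogovskiiField volume ω f := funext fun x ↦ by
    simp_rw [hu, hGω]
    exact setIntegral_eq_integral_of_forall_compl_eq_zero fun y hy ↦ by
      rw [Function.notMem_support.1 fun h ↦ hy (hfsupp h), zero_smul]
  obtain ⟨hu1, hholder, hdiv⟩ := hest f _ (hfsupp.trans hR) (holderBound_lambdaNorm hα0 hM hK)
  refine ⟨hu1, fun x hx ↦ bogovskiiField_eq_zero volume hΩ hωsupp hfsupp hx, fun x ↦ ?_,
    fun i j ↦ ?_⟩
  · rw [← traceCLM_euclideanSpace, hdiv, hωint, hf0, mul_one, zero_mul, sub_zero]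
  · rw [mul_assoc]
    exact lambdaNorm_le_two_mul (hholder.partialDeriv (hu1.differentiable one_ne_zero) i j)

/-- For `0 < α < 1` and `f ∈ Λ_α(ℝⁿ)` supported in the closure of the
star-shaped domain `Ω` with zero integral, the Bogovskiĭ field `u` is `C¹`, vanishes
outside the closure of `Ω`, solves `div u = f` on `Ω`, and its first derivatives are
bounded in the `Λ_α` norm by the `Λ_α` norm of `f`. -/
theorem bogovskii_lipschitz_estimate
    (n : ℕ) (hn : 2 ≤ n)
    (Ω B : Set (EuclideanSpace ℝ (Fin n)))
    (hΩo : IsOpen Ω) (hΩb : Bornology.IsBounded Ω)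
    (hBball : ∃ c r, 0 < r ∧ B = Metric.ball c r)
    (hBΩ : B ⊆ Ω)
    (hstar : ∀ x ∈ Ω, ∀ y ∈ B, segment ℝ x y ⊆ Ω)
    (ω : EuclideanSpace ℝ (Fin n) → ℝ)
    (hω : ContDiff ℝ (⊤ : ℕ∞) ω) (hωc : HasCompactSupport ω)
    (hωsupp : tsupport ω ⊆ B) (hωint : ∫ x, ω x = 1)
    (G : EuclideanSpace ℝ (Fin n) → EuclideanSpace ℝ (Fin n) → EuclideanSpace ℝ (Fin n))
    (hG : ∀ x y, x ≠ y → G x y =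
      ∫ s in Set.Ioo (0:ℝ) 1, ((s ^ n)⁻¹ * ω (y + s⁻¹ • (x - y))) • (s⁻¹ • (x - y)))
    (hGdiag : ∀ x, G x x = 0)
    (α : ℝ) (hα0 : 0 < α) (hα1 : α < 1) :
    ∃ C : ℝ,
      ∀ f : EuclideanSpace ℝ (Fin n) → ℝ,
        Continuous f →
        (∃ M : ℝ, ∀ x, |f x| ≤ M) →
        (∃ K : ℝ, ∀ x y, |f x - f y| ≤ K * ‖x - y‖ ^ α) →
        tsupport f ⊆ closure Ω →
        (∫ x, f x) = 0 →
        ∀ u : EuclideanSpace ℝ (Fin n) → EuclideanSpace ℝ (Fin n),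
          (∀ x, u x = ∫ y in Ω, f y • G x y) →
          ContDiff ℝ 1 u ∧
          (∀ x, x ∉ closure Ω → u x = 0) ∧
          (∀ x ∈ Ω, ∑ i, fderiv ℝ u x (EuclideanSpace.single i 1) i = f x) ∧
          (∀ i j : Fin n,
            lambdaNorm n α (fun x => fderiv ℝ (fun x' => u x' i) x (EuclideanSpace.single j 1))
              ≤ C * lambdaNorm n α f) := by
  obtain ⟨c, r, -, rfl⟩ := hBball
  obtain ⟨C, hC⟩ := bogovskii_lipschitz_estimate_general n Ω _ hΩb isOpen_ball hBΩ
    hstar ω (contDiff_infty.1 hω 2)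
    ((subset_tsupport ω).trans hωsupp) hωint G hG hGdiag α hα0 hα1
  refine ⟨C, fun f hf hM hK hfΩ hf0 u hu ↦ ?_⟩
  obtain ⟨hu1, hu0, hdiv, hbound⟩ := hC f hf hM hK hfΩ hf0 u hu
  exact ⟨hu1, fun x hx ↦ hu0 x (mt (subset_closure ·) hx), fun x _ ↦ hdiv x, hbound⟩
end

section
/- Let φ : ℝⁿ → ℝ be a C^∞ function. Then for every y ∈ Ω, φ(y) − ∫_{ℝⁿ} φ(x) ω(x) dx = − ∫_Ω G(x,y) · ∇φ(x) dx, where · denotes the Euclidean inner product and the integral on the right converges absolutely. -/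
open MeasureTheory Metric Set Filter Topology
open scoped RealInnerProductSpace

/-!
Fix `y`. By the fundamental theorem of calculus along the segment from `y` to `z`,
`φ z - φ y = ∫₀¹ Dφ (y + s (z - y)) (z - y) ds`. Integrating this against `ω z dz` turns the left
side into `∫ φ ω - φ y`. On the right, exchange the integrals and substitute
`x = y + s (z - y)` for fixed `s`: the derivative is now taken at `x`, which does not depend on `s`,
and integrating the remaining factors over `s` first produces the kernel `G (x, y)`.
By star-shapedness `G (·, y)` vanishes outside `Ω`, so the integral may be restricted to `Ω`.
-/

lemma quasiMeasurePreserving_skewProduct {α β γ : Type*} [MeasurableSpace α] [MeasurableSpace β]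
    [MeasurableSpace γ] {ν : Measure α} {μ : Measure β} {τ : Measure γ} [SFinite μ] [SFinite τ]
    {g : α → β → γ} (hg : Measurable (Function.uncurry g))
    (hqmp : ∀ᵐ a ∂ν, Measure.QuasiMeasurePreserving (g a) μ τ) :
    Measure.QuasiMeasurePreserving (fun p : α × β => (p.1, g p.1 p.2)) (ν.prod μ) (ν.prod τ) := by
  have hmeas : Measurable fun p : α × β => (p.1, g p.1 p.2) := measurable_fst.prodMk hg
  refine ⟨hmeas, Measure.AbsolutelyContinuous.mk fun t ht h_null => ?_⟩
  rw [Measure.map_apply hmeas ht, Measure.measure_prod_null (hmeas ht)]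
  filter_upwards [hqmp, (Measure.measure_prod_null ht).1 h_null] with a ha ha_null
  exact ha.preimage_null ha_null

lemma ae_restrict_Ioo_left_lt (ν : Measure ℝ) (a b : ℝ) : ∀ᵐ s ∂ν.restrict (Ioo a b), a < s :=
  (ae_restrict_mem measurableSet_Ioo).mono fun _ hs => hs.1

lemma integrable_prod_smul_of_hasCompactSupport {X Y F : Type*}
    [TopologicalSpace X] [SecondCountableTopology X] [T2Space X]
    [MeasurableSpace X] [OpensMeasurableSpace X]
    [TopologicalSpace Y] [SecondCountableTopology Y] [T2Space Y]
    [MeasurableSpace Y] [OpensMeasurableSpace Y]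
    [NormedAddCommGroup F] [NormedSpace ℝ F]
    {ν : Measure X} [SFinite ν] [IsFiniteMeasureOnCompacts ν] {μ : Measure Y} [SFinite μ]
    {ω : Y → ℝ} (hωc : HasCompactSupport ω) (hω : Integrable ω μ)
    {h : X × Y → F} (hh : Continuous h) {S K : Set X} (hK : IsCompact K) (hSK : S ⊆ K) :
    Integrable (fun p : X × Y => ω p.2 • h p) ((ν.restrict S).prod μ) := by
  have : IsFiniteMeasure (ν.restrict K) := ⟨by simpa using hK.measure_lt_top⟩
  have hω_snd : IntegrableOn (fun p : X × Y => ω p.2) (K ×ˢ tsupport ω) (ν.prod μ) := by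
    rw [IntegrableOn, ← Measure.prod_restrict]
    exact hω.restrict.comp_snd _
  have h_compact : IntegrableOn (fun p : X × Y => ω p.2 • h p) (K ×ˢ tsupport ω) (ν.prod μ) :=
    hω_snd.smul_continuousOn hh.continuousOn (hK.prod hωc)
  have h_strip : IntegrableOn (fun p : X × Y => ω p.2 • h p) (K ×ˢ univ) (ν.prod μ) := by
    refine h_compact.of_forall_sdiff_eq_zero (hK.measurableSet.prod .univ) fun p hp => ?_
    have hp_supp : p.2 ∉ tsupport ω := fun hp' => hp.2 ⟨hp.1.1, hp'⟩
    simp [image_eq_zero_of_notMem_tsupport hp_supp]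
  rw [← Measure.restrict_univ (μ := μ), Measure.prod_restrict]
  exact h_strip.mono_set (prod_mono_left hSK)

variable {E F : Type*} [NormedAddCommGroup E] [NormedSpace ℝ E]
  [NormedAddCommGroup F] [NormedSpace ℝ F]

lemma setIntegral_fderiv_segment [CompleteSpace F] {φ : E → F} (hφ : ContDiff ℝ 1 φ) (y z : E) :
    ∫ s in Ioo (0 : ℝ) 1, fderiv ℝ φ (y + s • (z - y)) (z - y) = φ z - φ y := by
  have hderiv (s : ℝ) :
      HasDerivAt (fun t : ℝ => φ (y + t • (z - y))) (fderiv ℝ φ (y + s • (z - y)) (z - y)) s := by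
    have hline : HasDerivAt (fun t : ℝ => y + t • (z - y)) (z - y) s := by
      simpa using ((hasDerivAt_id s).smul_const (z - y)).const_add y
    exact (hφ.differentiable one_ne_zero _).hasFDerivAt.comp_hasDerivAt s hline
  have hcont : Continuous fun s : ℝ => fderiv ℝ φ (y + s • (z - y)) (z - y) := by
    have := hφ.continuous_fderiv one_ne_zero
    fun_prop
  rw [← integral_Ioc_eq_integral_Ioo, ← intervalIntegral.integral_of_le zero_le_one,
    intervalIntegral.integral_eq_sub_of_hasDerivAt (fun s _ => hderiv s)
      (hcont.intervalIntegrable 0 1)]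
  simp

section Homothety

variable [FiniteDimensional ℝ E] [MeasurableSpace E] [BorelSpace E]
  (μ : Measure E) [μ.IsAddHaarMeasure] (y : E)

lemma quasiMeasurePreserving_homothety {r : ℝ} (hr : r ≠ 0) :
    Measure.QuasiMeasurePreserving (fun x => y + r • (x - y)) μ μ :=
  (measurePreserving_add_left μ y).quasiMeasurePreserving.comp
    ((Measure.quasiMeasurePreserving_smul μ hr).comp
      (measurePreserving_sub_right μ y).quasiMeasurePreserving)

lemma integral_homothety_inv (f : E → F) {s : ℝ} (hs : 0 < s) :
    ∫ x, (s ^ Module.finrank ℝ E)⁻¹ • f (y + s⁻¹ • (x - y)) ∂μ = ∫ z, f z ∂μ := by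
  rw [integral_smul, integral_sub_right_eq_self (fun x => f (y + s⁻¹ • x)) y,
    Measure.integral_comp_inv_smul_of_nonneg μ (fun x => f (y + x)) hs.le,
    integral_add_left_eq_self f y, inv_smul_smul₀ (pow_pos hs _).ne']

variable {μ} {ν : Measure ℝ} [SFinite ν]

lemma integrable_prod_homothety_inv (hν : ∀ᵐ s ∂ν, 0 < s) {H : ℝ × E → F}
    (hH : Integrable H (ν.prod μ)) :
    Integrable (fun p : ℝ × E =>
      (p.1 ^ Module.finrank ℝ E)⁻¹ • H (p.1, y + p.1⁻¹ • (p.2 - y))) (ν.prod μ) := by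
  have hqmp := quasiMeasurePreserving_skewProduct (ν := ν) (μ := μ) (τ := μ)
    (g := fun s x => y + s⁻¹ • (x - y)) (by fun_prop)
    (hν.mono fun s hs => quasiMeasurePreserving_homothety μ y (inv_ne_zero hs.ne'))
  have hmeas : AEStronglyMeasurable (fun p : ℝ × E =>
      (p.1 ^ Module.finrank ℝ E)⁻¹ • H (p.1, y + p.1⁻¹ • (p.2 - y))) (ν.prod μ) :=
    (by fun_prop : Measurable fun p : ℝ × E => (p.1 ^ Module.finrank ℝ E)⁻¹).aestronglyMeasurable
      |>.smul (hH.aestronglyMeasurable.comp_quasiMeasurePreserving hqmp)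
  refine (integrable_prod_iff hmeas).2 ⟨?_, hH.integral_norm_prod_left.congr ?_⟩
  · filter_upwards [hν, hH.prod_right_ae] with s hs hHs
    exact (((hHs.comp_add_left y).comp_smul (inv_ne_zero hs.ne')).comp_sub_right y).smul _
  · filter_upwards [hν] with s hs
    rw [← integral_homothety_inv μ y (fun z => ‖H (s, z)‖) hs]
    simp [norm_smul, abs_of_pos hs]

lemma integral_integral_homothety_inv (hν : ∀ᵐ s ∂ν, 0 < s) {H : ℝ × E → F}
    (hH : Integrable H (ν.prod μ)) :
    ∫ x, ∫ s, (s ^ Module.finrank ℝ E)⁻¹ • H (s, y + s⁻¹ • (x - y)) ∂ν ∂μ =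
      ∫ z, ∫ s, H (s, z) ∂ν ∂μ :=
  calc
    _ = ∫ s, ∫ x, (s ^ Module.finrank ℝ E)⁻¹ • H (s, y + s⁻¹ • (x - y)) ∂μ ∂ν :=
      (integral_integral_swap (integrable_prod_homothety_inv y hν hH)).symm
    _ = ∫ s, ∫ z, H (s, z) ∂μ ∂ν :=
      integral_congr_ae (hν.mono fun s hs => integral_homothety_inv μ y (fun z => H (s, z)) hs)
    _ = _ := integral_integral_swap hH

lemma integrable_prod_smul_fderiv_segment {ω : E → ℝ}
    (hω : Integrable ω μ) (hωc : HasCompactSupport ω)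
    {φ : E → F} (hφ : ContDiff ℝ 1 φ) :
    Integrable (fun p : ℝ × E => ω p.2 • fderiv ℝ φ (y + p.1 • (p.2 - y)) (p.2 - y))
      ((volume.restrict (Ioo 0 1)).prod μ) := by
  have := hφ.continuous_fderiv one_ne_zero
  exact integrable_prod_smul_of_hasCompactSupport hωc hω (by fun_prop) isCompact_Icc
    Ioo_subset_Icc_self

end Homothety

/-- The Bogovskiĭ kernel `G(x, y)` of the weight `ω`, with values in the ambient space. On the
diagonal the integrand is `0`, so the convention `G(x, x) = 0` is built in. -/
noncomputable def bogovskiiKernel (ω : E → ℝ) (x y : E) : E :=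
  ∫ s in Ioo (0 : ℝ) 1,
    ((s ^ Module.finrank ℝ E)⁻¹ * ω (y + s⁻¹ • (x - y))) • (s⁻¹ • (x - y))

namespace bogovskiiKernel

variable {ω : E → ℝ}

lemma self_eq_zero (ω : E → ℝ) (x : E) : bogovskiiKernel ω x x = 0 := by
  simp [bogovskiiKernel]

lemma eq_zero_of_notMem {Ω : Set E} {y : E}
    (hstar : ∀ z ∈ Function.support ω, segment ℝ y z ⊆ Ω)
    {x : E} (hx : x ∉ Ω) : bogovskiiKernel ω x y = 0 := by
  refine setIntegral_eq_zero_of_forall_eq_zero fun s hs => ?_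
  suffices ω (y + s⁻¹ • (x - y)) = 0 by simp [this]
  by_contra hω
  have hx_segment : x ∈ segment ℝ y (y + s⁻¹ • (x - y)) := by
    rw [segment_eq_image']
    exact ⟨s, ⟨hs.1.le, hs.2.le⟩, by simp [hs.1.ne']⟩
  exact hx (hstar _ hω hx_segment)

variable [FiniteDimensional ℝ E] [MeasurableSpace E] [BorelSpace E]
  {μ : Measure E} [μ.IsAddHaarMeasure]

lemma ae_integrableOn_integrand (hω : Integrable ω μ) (hωc : HasCompactSupport ω) (y : E) :
    ∀ᵐ x ∂μ, IntegrableOn (fun s : ℝ =>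
      ((s ^ Module.finrank ℝ E)⁻¹ * ω (y + s⁻¹ • (x - y))) • (s⁻¹ • (x - y))) (Ioo 0 1) := by
  have h_segment : Integrable (fun p : ℝ × E => ω p.2 • (p.2 - y))
      ((volume.restrict (Ioo 0 1)).prod μ) :=
    integrable_prod_smul_of_hasCompactSupport hωc hω (by fun_prop) isCompact_Icc
      Ioo_subset_Icc_self
  have h_kernel := integrable_prod_homothety_inv y (ae_restrict_Ioo_left_lt volume 0 1) h_segment
  filter_upwards [h_kernel.prod_left_ae] with x hx
  simpa [IntegrableOn, mul_smul] using hx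

variable [CompleteSpace F]

-- The point `x` is written `y + s • (y + s⁻¹ • (x - y) - y)` to expose the integrand as a function
-- of `s` and of the substituted variable `z = y + s⁻¹ • (x - y)`.
lemma fderiv_apply_ae_eq (hω : Integrable ω μ) (hωc : HasCompactSupport ω) (φ : E → F) (y : E) :
    (fun x => fderiv ℝ φ x (bogovskiiKernel ω x y)) =ᵐ[μ] fun x => ∫ s in Ioo (0 : ℝ) 1,
      (s ^ Module.finrank ℝ E)⁻¹ • ω (y + s⁻¹ • (x - y)) •
        fderiv ℝ φ (y + s • (y + s⁻¹ • (x - y) - y)) (y + s⁻¹ • (x - y) - y) := by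
  filter_upwards [ae_integrableOn_integrand hω hωc y] with x hx
  rw [bogovskiiKernel, ← ContinuousLinearMap.integral_comp_comm _ hx]
  refine setIntegral_congr_fun measurableSet_Ioo fun s hs => ?_
  simp [hs.1.ne', mul_smul]

lemma integrable_fderiv_apply (hω : Integrable ω μ) (hωc : HasCompactSupport ω) {φ : E → F}
    (hφ : ContDiff ℝ 1 φ) (y : E) :
    Integrable (fun x => fderiv ℝ φ x (bogovskiiKernel ω x y)) μ :=
  (integrable_prod_homothety_inv y (ae_restrict_Ioo_left_lt volume 0 1)
    (integrable_prod_smul_fderiv_segment y hω hωc hφ)).integral_prod_right.congr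
      (fderiv_apply_ae_eq hω hωc φ y).symm

lemma integral_fderiv_apply (hω : Integrable ω μ) (hωc : HasCompactSupport ω) {φ : E → F}
    (hφ : ContDiff ℝ 1 φ) (y : E) :
    ∫ x, fderiv ℝ φ x (bogovskiiKernel ω x y) ∂μ = ∫ z, ω z • (φ z - φ y) ∂μ :=
  calc
    _ = ∫ z, (∫ s in Ioo (0 : ℝ) 1, ω z • fderiv ℝ φ (y + s • (z - y)) (z - y)) ∂μ := by
      rw [integral_congr_ae (fderiv_apply_ae_eq hω hωc φ y)]
      exact integral_integral_homothety_inv y (ae_restrict_Ioo_left_lt volume 0 1)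
        (integrable_prod_smul_fderiv_segment y hω hωc hφ)
    _ = _ := by simp only [integral_smul, setIntegral_fderiv_segment hφ]

end bogovskiiKernel

theorem bogovskii_representation_formula_general
    [FiniteDimensional ℝ E] [MeasurableSpace E] [BorelSpace E] [CompleteSpace F]
    {μ : Measure E} [μ.IsAddHaarMeasure] {Ω : Set E} {y : E} {ω : E → ℝ} {φ : E → F}
    (hstar : ∀ z ∈ Function.support ω, segment ℝ y z ⊆ Ω)
    (hω : Integrable ω μ) (hωc : HasCompactSupport ω) (hωint : ∫ x, ω x ∂μ = 1)
    (hφ : ContDiff ℝ 1 φ) :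
    IntegrableOn (fun x => fderiv ℝ φ x (bogovskiiKernel ω x y)) Ω μ ∧
      φ y - ∫ x, ω x • φ x ∂μ = -∫ x in Ω, fderiv ℝ φ x (bogovskiiKernel ω x y) ∂μ := by
  refine ⟨(bogovskiiKernel.integrable_fderiv_apply hω hωc hφ y).integrableOn, ?_⟩
  have hωφ : Integrable (fun x => ω x • φ x) μ := by
    refine (integrableOn_iff_integrable_of_support_subset (s := tsupport ω) ?_).1
      (hω.integrableOn.smul_continuousOn hφ.continuous.continuousOn hωc)
    exact (Function.support_smul_subset_left ω φ).trans (subset_tsupport ω)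
  rw [setIntegral_eq_integral_of_forall_compl_eq_zero fun x hx => by
      rw [bogovskiiKernel.eq_zero_of_notMem hstar hx, map_zero],
    bogovskiiKernel.integral_fderiv_apply hω hωc hφ y]
  simp only [smul_sub]
  rw [integral_sub hωφ (hω.smul_const (φ y)), integral_smul_const, hωint, one_smul, neg_sub]

/-- Representation formula: for any smooth `φ` and `y ∈ Ω`,
`φ(y) − ∫ φ ω = − ∫_Ω G(x,y) · ∇φ(x) dx`, the integral converging absolutely. -/
theorem bogovskii_representation_formula
    (n : ℕ) (hn : 2 ≤ n)
    (Ω B : Set (EuclideanSpace ℝ (Fin n)))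
    (hΩo : IsOpen Ω) (hΩb : Bornology.IsBounded Ω)
    (hBball : ∃ c r, 0 < r ∧ B = Metric.ball c r)
    (hBΩ : B ⊆ Ω)
    (hstar : ∀ x ∈ Ω, ∀ y ∈ B, segment ℝ x y ⊆ Ω)
    (ω : EuclideanSpace ℝ (Fin n) → ℝ)
    (hω : ContDiff ℝ (⊤ : ℕ∞) ω) (hωc : HasCompactSupport ω)
    (hωsupp : tsupport ω ⊆ B) (hωint : ∫ x, ω x = 1)
    (G : EuclideanSpace ℝ (Fin n) → EuclideanSpace ℝ (Fin n) → EuclideanSpace ℝ (Fin n))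
    (hG : ∀ x y, x ≠ y → G x y =
      ∫ s in Set.Ioo (0:ℝ) 1, ((s ^ n)⁻¹ * ω (y + s⁻¹ • (x - y))) • (s⁻¹ • (x - y)))
    (hGdiag : ∀ x, G x x = 0)
    (φ : EuclideanSpace ℝ (Fin n) → ℝ) (hφ : ContDiff ℝ (⊤ : ℕ∞) φ) :
    ∀ y ∈ Ω,
      IntegrableOn (fun x => ⟪G x y, gradient φ x⟫) Ω ∧
      φ y - ∫ x, φ x * ω x = - ∫ x in Ω, ⟪G x y, gradient φ x⟫ := by
  intro y hy
  obtain rfl : G = bogovskiiKernel ω := by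
    funext x z
    rcases eq_or_ne x z with rfl | hxz
    · rw [hGdiag, bogovskiiKernel.self_eq_zero]
    · rw [hG x z hxz, bogovskiiKernel, finrank_euclideanSpace_fin]
  simpa [inner_gradient_right, mul_comm (φ _)] using
    bogovskii_representation_formula_general
      (fun z hz => hstar y hy z (hωsupp (subset_tsupport ω hz)))
      (hω.continuous.integrable_of_hasCompactSupport hωc) hωc hωint (hφ.of_le (by simp))
end
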